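/- Let k be an algebraically closed field of characteristic zero. Fix integers n ≥ 4, 2 ≤ t ≤ n−2 and 1 ≤ m ≤ n−t−1 with t ≥ m+1. Let h_0,…,h_t ∈ k[y_0,…,y_m] be homogeneous polynomials all of the same degree, let ψ_0,…,ψ_m ∈ k[x_{t+1},…,x_n] be homogeneous polynomials all of the same degree, and let a^{(ℓ)}_{u,v} ∈ k be scalars for ℓ = 1,…,t−m, u = 1,…,t−m−1, v = 0,…,t. For ℓ = 1,…,t−m define Q_ℓ ∈ k[x_0,…,x_n] as the determinant of the (t+1)×(t+1) matrix whose first row is (x_0,…,x_t), whose next m+1 rows are, for j = 0,…,m, the row ((∂h_0/∂y_j)(ψ_0,…,ψ_m), …, (∂h_t/∂y_j)(ψ_0,…,ψ_m)) obtained by substituting y_j ↦ ψ_j into the partial derivatives of the h_i, and whose last t−m−1 rows are the constant rows (a^{(ℓ)}_{u,0},…,a^{(ℓ)}_{u,t}). Let s ≥ 1 be the common degree of the Q_ℓ, fix an integer d > s, set μ = ⌊d/s⌋, and for k' = 0,…,μ let P_{k'} ∈ k[z_1,…,z_{t−m}, x_{t+1},…,x_n] be a biform that is homogeneous of degree k'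 in z_1,…,z_{t−m} and homogeneous of degree d − k'·s in x_{t+1},…,x_n. Then the polynomial f := Σ_{k'=0}^{μ} P_{k'}(Q_1,…,Q_{t−m}, x_{t+1},…,x_n) ∈ k[x_0,…,x_n], a form of degree d, has identically vanishing Hessian polynomial h_f. -/

import Mathlib

open MvPolynomial

/-- The Hessian polynomial of a multivariate polynomial: the determinant of the
matrix of second partial derivatives. -/
noncomputable def hessianDet {k : Type*} [CommRing k] {m : ℕ}
    (f : MvPolynomial (Fin m) k) : MvPolynomial (Fin m) k :=
  Matrix.det (Matrix.of fun i j => pderiv i (pderiv j f))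

theorem gn_chain {k : Type*} [CommRing k] {σ : Type*} [Fintype σ] {A : Type*} [CommRing A]
    [Algebra k A] (D : Derivation k A A) (g : σ → A) (p : MvPolynomial σ k) :
    D (aeval g p) = ∑ j, aeval g (pderiv j p) * D (g j) := by
  classical
  induction p using MvPolynomial.induction_on with
  | C c => simp
  | add p q hp hq => simp [hp, hq, add_mul, Finset.sum_add_distrib]
  | mul_X p i hp =>
    simp only [map_mul, aeval_X, Derivation.leibniz, hp, smul_eq_mul, map_add, add_mul,
      Finset.sum_add_distrib, Finset.mul_sum]
    congr 1
    · rw [Finset.sum_eq_single i]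
      · simp
      · intro b _ hb
        simp [pderiv_X_of_ne hb.symm]
      · simp
    · exact Finset.sum_congr rfl fun j _ => by ring

theorem gn_mk {k : Type*} [CommRing k] {σ : Type*} [Fintype σ]
    (W : σ → MvPolynomial σ k) (p : MvPolynomial σ k) :
    mkDerivation k W p = ∑ j, pderiv j p * W j := by
  have := gn_chain (mkDerivation k W) X p
  simpa [aeval_X_left] using this

theorem gn_hess {k : Type*} [Field k] {N : ℕ} (f : MvPolynomial (Fin N) k)
    (W : Fin N → MvPolynomial (Fin N) k) (hW : W ≠ 0)
    (h0 : mkDerivation k W f = 0)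
    (h1 : ∀ v, mkDerivation k (fun i => pderiv v (W i)) f = 0) : hessianDet f = 0 := by
  unfold hessianDet
  rw [← Matrix.exists_mulVec_eq_zero_iff]
  refine ⟨W, hW, ?_⟩
  funext v
  have h2 := congrArg (pderiv v) h0
  have h3 := h1 v
  rw [gn_mk] at h2 h3
  simp only [map_sum, Derivation.leibniz, smul_eq_mul, Finset.sum_add_distrib, map_zero] at h2
  rw [h3, zero_add] at h2
  simp only [Matrix.mulVec, dotProduct, Matrix.of_apply, Pi.zero_apply]
  rw [← h2]
  exact Finset.sum_congr rfl fun j _ => by ring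

theorem gn_prod {k A : Type*} [CommRing k] [CommRing A] [Algebra k A] (D : Derivation k A A)
    {ι : Type*} (s : Finset ι) (g : ι → A) (hg : ∀ i, D (g i) = 0) : D (∏ i ∈ s, g i) = 0 := by
  classical
  induction s using Finset.induction_on with
  | empty => simp
  | insert a s ha ih => rw [Finset.prod_insert ha]; simp [ih, hg]

theorem gn_detzero {k A : Type*} [CommRing k] [CommRing A] [Algebra k A] (D : Derivation k A A)
    {N : ℕ} (M : Matrix (Fin N) (Fin N) A) (hM : ∀ i j, D (M i j) = 0) : D M.det = 0 := by
  rw [Matrix.det_apply, map_sum]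
  refine Finset.sum_eq_zero fun σ _ => ?_
  rw [Units.smul_def, map_zsmul, gn_prod D _ _ (fun i => hM _ _), smul_zero]

theorem gn_detrow {k A : Type*} [CommRing k] [CommRing A] [Algebra k A] (D : Derivation k A A)
    {N : ℕ} (M : Matrix (Fin (N + 1)) (Fin (N + 1)) A)
    (hM : ∀ (i : Fin N) j, D (M i.succ j) = 0) :
    D M.det = (M.updateRow 0 (fun v => D (M 0 v))).det := by
  rw [Matrix.det_succ_row_zero, Matrix.det_succ_row_zero, map_sum]
  refine Finset.sum_congr rfl fun v _ => ?_
  have h1 : D (M.submatrix Fin.succ v.succAbove).det = 0 :=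
    gn_detzero D _ fun i j => hM _ _
  have h2 : (M.updateRow 0 (fun v => D (M 0 v))).submatrix Fin.succ v.succAbove
      = M.submatrix Fin.succ v.succAbove := by
    ext i j
    simp
  have h3 : D ((-1 : A) ^ (v : ℕ)) = 0 := by
    rw [Derivation.leibniz_pow]; simp
  rw [h2]
  simp [h1, h3]
  ring

theorem gn_lin {A J : Type*} [CommRing A] {N : ℕ} (M : Matrix (Fin N) (Fin N) A) (i : Fin N)
    (R : J → Fin N → A) (c : J → A) (s : Finset J) (hR : ∀ j, (M.updateRow i (R j)).det = 0) :
    (M.updateRow i (∑ j ∈ s, c j • R j)).det = 0 := by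
  classical
  induction s using Finset.induction_on with
  | empty => exact Matrix.det_eq_zero_of_row_eq_zero i (by simp)
  | insert a s ha ih =>
    rw [Finset.sum_insert ha, Matrix.det_updateRow_add, Matrix.det_updateRow_smul, ih, hR]
    simp

theorem gn_homog {k : Type*} [Field k] {L N : ℕ} (s d e : ℕ) (hes : e * s ≤ d)
    (Q : Fin L → MvPolynomial (Fin N) k) (hQ : ∀ l, (Q l).IsHomogeneous s)
    (p : MvPolynomial (Fin L ⊕ Fin N) k)
    (h1 : IsWeightedHomogeneous (Sum.elim (fun _ => 1) (fun _ => 0)) p e)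
    (h2 : IsWeightedHomogeneous (Sum.elim (fun _ => 0) (fun _ => 1)) p (d - e * s)) :
    (aeval (Sum.elim Q X) p : MvPolynomial (Fin N) k).IsHomogeneous d := by
  rw [aeval_def, eval₂_eq']
  refine IsHomogeneous.sum _ _ _ fun c hc => ?_
  have g1 := h1 (mem_support_iff.mp hc)
  have g2 := h2 (mem_support_iff.mp hc)
  rw [Finsupp.weight_apply, Finsupp.sum_fintype _ _ (by simp)] at g1 g2
  simp only [Fintype.sum_sum_type, Sum.elim_inl, Sum.elim_inr, smul_eq_mul, mul_one, mul_zero,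
    Finset.sum_const_zero, add_zero, zero_add] at g1 g2
  have h3 : (∏ i, (Sum.elim Q X i : MvPolynomial (Fin N) k) ^ c i).IsHomogeneous
      (∑ i, Sum.elim (fun _ => s) (fun _ => 1) i * c i) := by
    refine IsHomogeneous.prod _ _ _ fun i _ => ?_
    rcases i with i | i
    · exact (hQ i).pow _
    · exact (isHomogeneous_X k i).pow _
  have h4 : ∑ i, Sum.elim (fun _ => s) (fun _ => 1) i * c i = d := by
    simp only [Fintype.sum_sum_type, Sum.elim_inl, Sum.elim_inr, ← Finset.mul_sum, g1, one_mul, g2]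
    rw [mul_comm]; omega
  rw [h4] at h3
  exact h3.C_mul _

/-- Every Gordan–Noether polynomial of type `(n, t, m, s)` is a form of degree `d`
with identically vanishing Hessian (Proposition 4.4 of the paper). Here the `ψⱼ`
are forms in the variables `x_{t+1}, …, x_n` only (encoded by the vanishing of the
partial derivatives with respect to the first `t+1` variables), `Q_ℓ` is the
determinant of the `(t+1) × (t+1)` matrix whose first row is `(x₀, …, x_t)`, whose
next `m+1` rows are the rows `(∂h₀/∂y_j(ψ), …, ∂h_t/∂y_j(ψ))`, and whose last
`t-m-1` rows are rows of constants `a⁽ˡ⁾_{u,v}`, and the `P_{k'}` are biforms of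
bidegree `(k', d - k'·s)` in `(z₁, …, z_{t-m}; x_{t+1}, …, x_n)`. -/
theorem stmt17 {k : Type*} [Field k] [IsAlgClosed k] [CharZero k]
    (n t m : ℕ) (hn : 4 ≤ n) (ht2 : 2 ≤ t) (htn : t ≤ n - 2)
    (hm1 : 1 ≤ m) (hmn : m ≤ n - t - 1) (htm : m + 1 ≤ t)
    (eh : ℕ) (h : Fin (t + 1) → MvPolynomial (Fin (m + 1)) k)
    (hhhom : ∀ i, (h i).IsHomogeneous eh)
    (epsi : ℕ) (ψ : Fin (m + 1) → MvPolynomial (Fin (n + 1)) k)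
    (hψhom : ∀ j, (ψ j).IsHomogeneous epsi)
    (hψvars : ∀ j, ∀ i : Fin (n + 1), (i : ℕ) ≤ t → pderiv i (ψ j) = 0)
    (a : Fin (t - m) → Fin (t - m - 1) → Fin (t + 1) → k)
    (Q : Fin (t - m) → MvPolynomial (Fin (n + 1)) k)
    (hQ : ∀ ℓ, Q ℓ = Matrix.det (Matrix.of fun r v : Fin (t + 1) =>
      if (r : ℕ) = 0 then
        X (⟨(v : ℕ), by have := v.isLt; omega⟩ : Fin (n + 1))
      else if hr : (r : ℕ) < m + 2 then
        aeval ψ (pderiv (⟨(r : ℕ) - 1, by omega⟩ : Fin (m + 1)) (h v))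
      else
        C (a ℓ (⟨(r : ℕ) - (m + 2), by have := r.isLt; omega⟩ : Fin (t - m - 1)) v)))
    (s : ℕ) (hs : 1 ≤ s) (hQhom : ∀ ℓ, (Q ℓ).IsHomogeneous s)
    (d : ℕ) (hds : s < d)
    (P : Fin (d / s + 1) → MvPolynomial (Fin (t - m) ⊕ Fin (n + 1)) k)
    (hPvars : ∀ k', ∀ i : Fin (n + 1), (i : ℕ) ≤ t → pderiv (Sum.inr i) (P k') = 0)
    (hPbihom : ∀ k' : Fin (d / s + 1),
      IsWeightedHomogeneous (Sum.elim (fun _ => 1) (fun _ => 0)) (P k') ((k' : ℕ)) ∧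
      IsWeightedHomogeneous (Sum.elim (fun _ => 0) (fun _ => 1)) (P k')
        (d - (k' : ℕ) * s))
    (f : MvPolynomial (Fin (n + 1)) k)
    (hf : f = ∑ k' : Fin (d / s + 1), aeval (Sum.elim Q X) (P k')) :
    f.IsHomogeneous d ∧ hessianDet f = 0 := by
  have hks : ∀ k' : Fin (d / s + 1), (k' : ℕ) * s ≤ d := fun k' =>
    (Nat.mul_le_mul_right s (Nat.lt_succ_iff.mp k'.isLt)).trans (Nat.div_mul_le_self d s)
  refine ⟨?_, ?_⟩
  · rw [hf]
    exact IsHomogeneous.sum _ _ _ fun k' _ =>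
      gn_homog s d k' (hks k') Q hQhom (P k') (hPbihom k').1 (hPbihom k').2
  have hDf : ∀ W : Fin (n + 1) → MvPolynomial (Fin (n + 1)) k,
      (∀ i : Fin (n + 1), t < (i : ℕ) → W i = 0) → (∀ ℓ, mkDerivation k W (Q ℓ) = 0) →
      mkDerivation k W f = 0 := by
    intro W hW hWQ
    rw [hf, map_sum]
    refine Finset.sum_eq_zero fun k' _ => ?_
    rw [gn_chain]
    refine Finset.sum_eq_zero fun j _ => ?_
    rcases j with ℓ | i
    · simp [hWQ]
    · by_cases hi : (i : ℕ) ≤ t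
      · simp [hPvars k' i hi]
      · simp [mkDerivation_X, hW i (by omega)]
  suffices hmain : ∃ W : Fin (n + 1) → MvPolynomial (Fin (n + 1)) k, W ≠ 0 ∧
      (∀ i : Fin (n + 1), t < (i : ℕ) → W i = 0) ∧ (∀ ℓ, mkDerivation k W (Q ℓ) = 0) ∧
      (∀ ℓ v, mkDerivation k (fun i => pderiv v (W i)) (Q ℓ) = 0) by
    obtain ⟨W, hW0, hWs, hW1, hW2⟩ := hmain
    refine gn_hess f W hW0 (hDf W hWs hW1) fun v => hDf _ ?_ fun ℓ => hW2 ℓ v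
    intro i hi
    rw [hWs i hi, map_zero]
  by_cases hQ0 : ∀ ℓ, Q ℓ = 0
  · refine ⟨fun i => if i = 0 then 1 else 0, ?_, ?_, ?_, ?_⟩
    · intro h0
      simpa using congrFun h0 0
    · intro i hi
      refine if_neg ?_
      rintro rfl
      simp at hi
    · intro ℓ; rw [hQ0, map_zero]
    · intro ℓ v; rw [hQ0, map_zero]
  push Not at hQ0
  obtain ⟨ℓ₀, hℓ₀⟩ := hQ0
  let R : Fin (m + 1) → Fin (t + 1) → MvPolynomial (Fin (n + 1)) k :=
    fun j v => aeval ψ (pderiv j (h v))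
  let E : (Fin (t + 1) → MvPolynomial (Fin (n + 1)) k) →
      Fin (n + 1) → MvPolynomial (Fin (n + 1)) k :=
    fun u i => if hi : (i : ℕ) < t + 1 then u ⟨i, hi⟩ else 0
  have hEs : ∀ u, ∀ i : Fin (n + 1), t < (i : ℕ) → E u i = 0 := fun u i hi =>
    dif_neg (by omega)
  have hEψ : ∀ u j, mkDerivation k (E u) (ψ j) = 0 := by
    intro u j
    rw [gn_mk]
    refine Finset.sum_eq_zero fun i _ => ?_
    by_cases hi : (i : ℕ) ≤ t
    · simp [hψvars j i hi]
    · simp [hEs u i (by omega)]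
  let rw_ : Fin (m + 1) → Fin (t + 1) := fun j => ⟨j + 1, by omega⟩
  have hrow : ∀ ℓ, ∃ M : Matrix (Fin (t + 1)) (Fin (t + 1)) (MvPolynomial (Fin (n + 1)) k),
      Q ℓ = M.det ∧ (∀ j, M (rw_ j) = R j) ∧
      ∀ u, mkDerivation k (E u) (Q ℓ) = (M.updateRow 0 u).det := by
    intro ℓ
    refine ⟨_, hQ ℓ, ?_, ?_⟩
    · intro j
      funext v
      have hj : (j : ℕ) + 1 < m + 2 := by omega
      simp [rw_, R, hj]
    · intro u
      rw [hQ ℓ, gn_detrow]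
      · congr 2
        funext v
        have hv : (v : ℕ) < t + 1 := v.isLt
        simp only [Matrix.of_apply, Fin.val_zero, if_true, mkDerivation_X, E]
        rw [dif_pos hv]
      · intro i v
        simp only [Matrix.of_apply, Fin.val_succ, Nat.add_eq_zero_iff, one_ne_zero, and_false,
          if_false]
        split_ifs with hr
        · rw [gn_chain]
          exact Finset.sum_eq_zero fun j _ => by rw [hEψ, mul_zero]
        · exact Derivation.map_algebraMap _ _
  have hkill : ∀ ℓ (c : Fin (m + 1) → MvPolynomial (Fin (n + 1)) k),
      mkDerivation k (E (∑ j, c j • R j)) (Q ℓ) = 0 := by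
    intro ℓ c
    obtain ⟨M, -, hMR, hMd⟩ := hrow ℓ
    rw [hMd]
    refine gn_lin M 0 R c Finset.univ fun j => ?_
    have h2 : rw_ j ≠ 0 := by
      intro h0
      have := congrArg Fin.val h0
      simp [rw_] at this
    refine Matrix.det_zero_of_row_eq h2.symm ?_
    rw [Matrix.updateRow_self, Matrix.updateRow_ne h2, hMR]
  have hindep : LinearIndependent (MvPolynomial (Fin (n + 1)) k) R := by
    obtain ⟨M, hM, hMR, -⟩ := hrow ℓ₀
    have h1 := Matrix.linearIndependent_rows_of_det_ne_zero (A := M) (hM ▸ hℓ₀)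
    have h2 := h1.comp rw_ (by
      intro i j hij
      have := congrArg Fin.val hij
      simp only [rw_] at this
      ext; omega)
    have h3 : R = (fun i => M i) ∘ rw_ := by
      funext j
      exact (hMR j).symm
    rw [h3]
    exact h2
  have hEne : ∀ u, u ≠ 0 → E u ≠ 0 := by
    intro u hu hE
    apply hu
    funext v
    have := congrFun hE ⟨v, by omega⟩
    simp only [E] at this
    rw [dif_pos v.isLt] at this
    exact this
  have hEd : ∀ u v, (fun i => pderiv v (E u i)) = E (fun i => pderiv v (u i)) := by
    intro u v
    funext i
    simp only [E]
    split_ifs <;> simp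
  by_cases hw : (∑ j, ψ j • R j) = 0
  · have hψ0 : ∀ j, ψ j = 0 := Fintype.linearIndependent_iff.mp hindep ψ hw
    refine ⟨E (R 0), hEne _ (hindep.ne_zero 0), hEs _, ?_, ?_⟩
    · intro ℓ
      have := hkill ℓ (Pi.single 0 1)
      rwa [Finset.sum_eq_single 0 (by intro b _ hb; simp [hb]) (by simp), Pi.single_eq_same,
        one_smul] at this
    · intro ℓ v
      rw [hEd]
      have : (fun i => pderiv v (R 0 i)) = ∑ j, (0 : Fin (m + 1) → MvPolynomial (Fin (n + 1)) k) j • R j := by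
        funext i
        simp only [R, gn_chain]
        simp [hψ0]
      rw [this]
      exact hkill ℓ 0
  · refine ⟨E (∑ j, ψ j • R j), hEne _ hw, hEs _, fun ℓ => hkill ℓ ψ, ?_⟩
    intro ℓ v
    rw [hEd]
    have h1 : ∀ i, (∑ j, ψ j • R j) i = eh • aeval ψ (h i) := by
      intro i
      have := congrArg (aeval ψ) (hhhom i).sum_X_mul_pderiv
      simpa [R] using this
    have h2 : (fun i => pderiv v ((∑ j, ψ j • R j) i)) =
        ∑ j, (fun j => eh • pderiv v (ψ j)) j • R j := by
      funext i
      rw [h1, map_nsmul, gn_chain]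
      simp only [Finset.sum_apply, Pi.smul_apply, smul_eq_mul, R, Finset.smul_sum]
      exact Finset.sum_congr rfl fun j _ => by rw [nsmul_eq_mul, nsmul_eq_mul]; ring
    rw [h2]
    exact hkill ℓ _
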